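/- Suppose the measurements are noise-free, i.e. y = Ax with w = 0, and that 1 − (d−1)ν − (2K−1)dμ_B > 0. Then for every subset S ⊆ I1 with 0 ≤ |S| ≤ K−1, the residual r = y − P_S y, where P_S is the orthogonal projection onto the column span of the blocks {A_l : l ∈ S}, satisfies max_{l ∉ I1} ‖A_l^T r‖_2 < max_{l ∈ I1} ‖A_l^T r‖_2; hence block-OMP recovers the exact block-sparsity pattern in K iterations. -/

import Mathlib

/- Setting: a measurement matrix `A ∈ ℝ^{m×n}` with `n = L·d`, partitioned into `L` column
blocks of size `m×d`; columns are indexed by pairs `(l, j)` (block `l`, position `j`). -/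

noncomputable section

open Finset Matrix

/-- Euclidean (ℓ₂) norm of a finitely indexed real vector. -/
def e2norm {ι : Type*} [Fintype ι] (v : ι → ℝ) : ℝ := Real.sqrt (∑ i, v i ^ 2)

/-- Euclidean inner (dot) product of two real vectors. -/
def dotp {ι : Type*} [Fintype ι] (u v : ι → ℝ) : ℝ := ∑ i, u i * v i

/-- The `(l, j)` column of the block matrix `A` (block `l`, position `j` inside the block). -/
def acol {m L d : ℕ} (A : Matrix (Fin m) (Fin L × Fin d) ℝ) (l : Fin L) (j : Fin d) :
    Fin m → ℝ :=
  fun i => A i (l, j)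

/-- `A_lᵀ v` : correlation of the `l`-th block of `A` with a vector `v ∈ ℝ^m`. -/
def blkT {m L d : ℕ} (A : Matrix (Fin m) (Fin L × Fin d) ℝ) (l : Fin L) (v : Fin m → ℝ) :
    Fin d → ℝ :=
  fun j => dotp (acol A l j) v

/-- Spectral norm (largest singular value) `ρ(X)` of a real matrix, as the supremum of
`‖Xu‖₂ / ‖u‖₂` over nonzero `u`. -/
def specNorm {p q : ℕ} (X : Matrix (Fin p) (Fin q) ℝ) : ℝ :=
  ⨆ u : {u : Fin q → ℝ // u ≠ 0}, e2norm (X *ᵥ u.1) / e2norm u.1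

/-- The `d × d` cross-Gram matrix `A_iᵀ A_j` of two blocks of `A`. -/
def bgram {m L d : ℕ} (A : Matrix (Fin m) (Fin L × Fin d) ℝ) (i j : Fin L) :
    Matrix (Fin d) (Fin d) ℝ :=
  fun a b => dotp (acol A i a) (acol A j b)

/-- Block-coherence `μ_B = max_{i ≠ j} (1/d) ρ(A_iᵀ A_j)`. -/
def blockCoh {m L d : ℕ} (A : Matrix (Fin m) (Fin L × Fin d) ℝ) : ℝ :=
  ⨆ p : {p : Fin L × Fin L // p.1 ≠ p.2},
    (1 / (d : ℝ)) * specNorm (bgram A p.1.1 p.1.2)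

/-- Sub-coherence `ν`: the maximum of `|a_iᵀ a_j|` over pairs of distinct columns lying in the
same block of `A`. -/
def subCoh {m L d : ℕ} (A : Matrix (Fin m) (Fin L × Fin d) ℝ) : ℝ :=
  ⨆ t : {t : Fin L × Fin d × Fin d // t.2.1 ≠ t.2.2},
    |dotp (acol A t.1.1 t.1.2.1) (acol A t.1.1 t.1.2.2)|

lemma e2norm_eq {ι : Type*} [Fintype ι] (v : ι → ℝ) : e2norm v = ‖WithLp.toLp 2 v‖ := by
  simp [e2norm, EuclideanSpace.norm_eq]

lemma e2norm_nonneg {ι : Type*} [Fintype ι] (v : ι → ℝ) : 0 ≤ e2norm v := Real.sqrt_nonneg _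

lemma e2norm_sq {ι : Type*} [Fintype ι] (v : ι → ℝ) : e2norm v ^ 2 = ∑ i, v i ^ 2 :=
  Real.sq_sqrt (Finset.sum_nonneg fun _ _ => sq_nonneg _)

lemma e2norm_pos {ι : Type*} [Fintype ι] (v : ι → ℝ) (h : v ≠ 0) : 0 < e2norm v := by
  rw [e2norm_eq, norm_pos_iff]
  intro h0
  apply h
  ext i
  exact congrArg (fun w : EuclideanSpace ℝ ι => w i) h0

lemma e2norm_zero {ι : Type*} [Fintype ι] : e2norm (0 : ι → ℝ) = 0 := by
  simp [e2norm]

lemma e2norm_sum_le {ι κ : Type*} [Fintype ι] (s : Finset κ) (f : κ → ι → ℝ) :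
    e2norm (∑ k ∈ s, f k) ≤ ∑ k ∈ s, e2norm (f k) := by
  simp only [e2norm_eq, WithLp.toLp_sum]
  exact norm_sum_le _ _

lemma e2norm_add_ge {ι : Type*} [Fintype ι] (u v : ι → ℝ) :
    e2norm u - e2norm v ≤ e2norm (u + v) := by
  simp only [e2norm_eq, WithLp.toLp_add]
  have := norm_sub_le (WithLp.toLp 2 u + WithLp.toLp 2 v) (WithLp.toLp 2 v)
  rw [add_sub_cancel_right] at this
  linarith

lemma dotp_le {ι : Type*} [Fintype ι] (u v : ι → ℝ) : dotp u v ≤ e2norm u * e2norm v :=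
  Real.sum_mul_le_sqrt_mul_sqrt _ _ _

lemma mulVec_frob {p q : ℕ} (X : Matrix (Fin p) (Fin q) ℝ) (u : Fin q → ℝ) :
    e2norm (X *ᵥ u) ≤ Real.sqrt (∑ i, ∑ j, X i j ^ 2) * e2norm u := by
  unfold e2norm
  have h0 : 0 ≤ ∑ i, ∑ j, X i j ^ 2 :=
    Finset.sum_nonneg fun _ _ => Finset.sum_nonneg fun _ _ => sq_nonneg _
  rw [← Real.sqrt_mul h0]
  apply Real.sqrt_le_sqrt
  rw [Finset.sum_mul]
  apply Finset.sum_le_sum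
  intro i _
  exact Finset.sum_mul_sq_le_sq_mul_sq Finset.univ (fun j => X i j) u

lemma mulVec_le_specNorm {p q : ℕ} (X : Matrix (Fin p) (Fin q) ℝ) (u : Fin q → ℝ) :
    e2norm (X *ᵥ u) ≤ specNorm X * e2norm u := by
  by_cases h : u = 0
  · subst h
    simp [e2norm_zero]
  · rw [← div_le_iff₀ (e2norm_pos u h)]
    refine le_ciSup (f := fun u : {u : Fin q → ℝ // u ≠ 0} => e2norm (X *ᵥ u.1) / e2norm u.1)
      ?_ ⟨u, h⟩
    refine ⟨Real.sqrt (∑ i, ∑ j, X i j ^ 2), ?_⟩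
    rintro _ ⟨v, rfl⟩
    exact (div_le_iff₀ (e2norm_pos v.1 v.2)).2 (mulVec_frob X v.1)

lemma specNorm_nonneg {p q : ℕ} (X : Matrix (Fin p) (Fin q) ℝ) : 0 ≤ specNorm X :=
  Real.iSup_nonneg fun _ => div_nonneg (e2norm_nonneg _) (e2norm_nonneg _)

lemma blockCoh_nonneg {m L d : ℕ} (A : Matrix (Fin m) (Fin L × Fin d) ℝ) : 0 ≤ blockCoh A :=
  Real.iSup_nonneg fun _ => mul_nonneg (by positivity) (specNorm_nonneg _)

lemma off_le {m L d : ℕ} (hd : 0 < d) (A : Matrix (Fin m) (Fin L × Fin d) ℝ) (i j : Fin L)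
    (hij : i ≠ j) (u : Fin d → ℝ) :
    e2norm (bgram A i j *ᵥ u) ≤ d * blockCoh A * e2norm u := by
  refine (mulVec_le_specNorm _ _).trans (mul_le_mul_of_nonneg_right ?_ (e2norm_nonneg _))
  have h := le_ciSup (f := fun p : {p : Fin L × Fin L // p.1 ≠ p.2} =>
    (1 / (d : ℝ)) * specNorm (bgram A p.1.1 p.1.2)) (Set.finite_range _).bddAbove ⟨(i, j), hij⟩
  have hd' : (0 : ℝ) < d := by exact_mod_cast hd
  change 1 / (d : ℝ) * specNorm (bgram A i j) ≤ blockCoh A at h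
  rw [one_div, inv_mul_le_iff₀ hd'] at h
  exact h

lemma subCoh_nonneg {m L d : ℕ} (A : Matrix (Fin m) (Fin L × Fin d) ℝ) : 0 ≤ subCoh A :=
  Real.iSup_nonneg fun _ => abs_nonneg _

lemma subCoh_ge {m L d : ℕ} (A : Matrix (Fin m) (Fin L × Fin d) ℝ) (l : Fin L) (a b : Fin d)
    (hab : a ≠ b) : |bgram A l l a b| ≤ subCoh A :=
  le_ciSup (f := fun t : {t : Fin L × Fin d × Fin d // t.2.1 ≠ t.2.2} =>
    |dotp (acol A t.1.1 t.1.2.1) (acol A t.1.1 t.1.2.2)|) (Set.finite_range _).bddAbove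
    ⟨(l, a, b), hab⟩

lemma diag_ge {m L d : ℕ} (A : Matrix (Fin m) (Fin L × Fin d) ℝ)
    (hA : ∀ l j, e2norm (acol A l j) = 1) (l : Fin L) (v : Fin d → ℝ) :
    (1 - ((d : ℝ) - 1) * subCoh A) * e2norm v ≤ e2norm (bgram A l l *ᵥ v) := by
  by_cases hv : v = 0
  · subst hv
    simp [e2norm_zero]
  have hp := e2norm_pos v hv
  refine le_of_mul_le_mul_right ?_ hp
  refine le_trans ?_ (dotp_le _ _)
  have hterm : ∀ a b, (if a = b then (1 + subCoh A) * v a ^ 2 else 0) - subCoh A * (|v a| * |v b|)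
      ≤ bgram A l l a b * v b * v a := by
    intro a b
    split_ifs with hab
    · subst hab
      have h1 : bgram A l l a a = 1 := by
        have := e2norm_sq (acol A l a)
        rw [hA] at this
        simp only [bgram, dotp]
        simp only [pow_two] at this
        linarith
      rw [h1, abs_mul_abs_self]
      nlinarith
    · have h1 := subCoh_ge A l a b hab
      have h2 : |bgram A l l a b * v b * v a| ≤ subCoh A * (|v a| * |v b|) := by
        rw [abs_mul, abs_mul]
        have := mul_le_mul_of_nonneg_right h1 (mul_nonneg (abs_nonneg (v a)) (abs_nonneg (v b)))
        linarith
      linarith [neg_abs_le (bgram A l l a b * v b * v a)]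
  have hsum := Finset.sum_le_sum (s := Finset.univ) fun a _ =>
    Finset.sum_le_sum (s := Finset.univ) fun b _ => hterm a b
  have hR : ∑ a, ∑ b, bgram A l l a b * v b * v a = dotp (bgram A l l *ᵥ v) v := by
    simp only [dotp, Matrix.mulVec, dotProduct, Finset.sum_mul]
  have hL : ∑ a, ∑ b, ((if a = b then (1 + subCoh A) * v a ^ 2 else 0)
      - subCoh A * (|v a| * |v b|)) = (1 + subCoh A) * e2norm v ^ 2
        - subCoh A * (∑ a, |v a|) ^ 2 := by
    simp only [Finset.sum_sub_distrib, Finset.sum_ite_eq, Finset.mem_univ, if_true,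
      ← Finset.mul_sum, e2norm_sq, pow_two (∑ a, |v a|), Finset.sum_mul_sum]
  rw [hR, hL] at hsum
  have hcs : (∑ a, |v a|) ^ 2 ≤ d * e2norm v ^ 2 := by
    have := sq_sum_le_card_mul_sum_sq (s := Finset.univ) (f := fun a => |v a|)
    simpa [e2norm_sq] using this
  have := mul_le_mul_of_nonneg_left hcs (subCoh_nonneg A)
  nlinarith

lemma blkT_expand {m L d : ℕ} (A : Matrix (Fin m) (Fin L × Fin d) ℝ) (l : Fin L)
    (z : Fin L → Fin d → ℝ) :
    blkT A l (fun i => ∑ k, ∑ j, A i (k, j) * z k j) = ∑ k, bgram A l k *ᵥ z k := by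
  ext a
  simp only [blkT, dotp, Finset.sum_apply, Matrix.mulVec, dotProduct, bgram, acol,
    Finset.mul_sum, Finset.sum_mul]
  rw [Finset.sum_comm]
  refine Finset.sum_congr rfl fun k _ => ?_
  rw [Finset.sum_comm]
  refine Finset.sum_congr rfl fun j _ => Finset.sum_congr rfl fun i _ => by ring

/-- **Noise-free block-OMP recovery.**  If `y = Ax` (no noise) and
`1 - (d-1)ν - (2K-1)dμ_B > 0`, then for every subset `S ⊆ I1` with `|S| ≤ K-1` the residual
`r = y - P_S y` correlates strictly better with some block inside the support `I1` than with
every block outside `I1`; hence block-OMP recovers the exact block-sparsity pattern in `K`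
iterations. -/
theorem stmt1 {m L d K : ℕ}
    (hm : m < L * d) (hd : 0 < d) (hK1 : 1 ≤ K)
    (A : Matrix (Fin m) (Fin L × Fin d) ℝ)
    (hA : ∀ l j, e2norm (acol A l j) = 1)
    (μB ν : ℝ) (hμB : μB = blockCoh A) (hν : ν = subCoh A)
    (x : Fin L × Fin d → ℝ)
    (I1 : Finset (Fin L))
    (hI1 : ∀ l, l ∈ I1 ↔ ∃ j, x (l, j) ≠ 0)
    (hcard : I1.card = K) (hKL : K < L)
    (y : Fin m → ℝ) (hy : y = A *ᵥ x)
    (hcond : 0 < 1 - ((d : ℝ) - 1) * ν - (2 * (K : ℝ) - 1) * d * μB) :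
    ∀ S : Finset (Fin L), S ⊆ I1 → S.card < K →
      ∀ PSy : Fin m → ℝ,
        (∃ c : Fin L → Fin d → ℝ, ∀ i, PSy i = ∑ l ∈ S, ∑ j, A i (l, j) * c l j) →
        (∀ l ∈ S, ∀ j, dotp (acol A l j) (fun i => y i - PSy i) = 0) →
        (⨆ l : {l : Fin L // l ∉ I1}, e2norm (blkT A l.1 (fun i => y i - PSy i))) <
          ⨆ l : {l : Fin L // l ∈ I1}, e2norm (blkT A l.1 (fun i => y i - PSy i)) := by
  intro S hS hSK PSy hP _
  obtain ⟨c, hc⟩ := hP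
  subst hμB hν
  set z : Fin L → Fin d → ℝ := fun l j => x (l, j) - if l ∈ S then c l j else 0 with hz
  have hr : (fun i => y i - PSy i) = fun i => ∑ k, ∑ j, A i (k, j) * z k j := by
    ext i
    rw [hy, hc i]
    simp only [hz, mul_sub, Finset.sum_sub_distrib, Matrix.mulVec, dotProduct,
      Fintype.sum_prod_type]
    congr 1
    rw [← Finset.sum_subset (Finset.subset_univ S)]
    · refine Finset.sum_congr rfl fun k hk => ?_
      simp [hk]
    · intro k _ hk
      simp [hk]
  have hz0 : ∀ l, l ∉ I1 → z l = 0 := by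
    intro l hl
    have h1 : l ∉ S := fun h => hl (hS h)
    ext j
    have h2 : x (l, j) = 0 := by
      by_contra h
      exact hl ((hI1 l).2 ⟨j, h⟩)
    simp [hz, h1, h2]
  have hex : ∀ l, blkT A l (fun i => y i - PSy i) = ∑ k ∈ I1, bgram A l k *ᵥ z k := by
    intro l
    rw [hr, blkT_expand]
    refine (Finset.sum_subset (Finset.subset_univ I1) ?_).symm
    intro k _ hk
    rw [hz0 k hk, Matrix.mulVec_zero]
  have hne : I1.Nonempty := Finset.card_pos.1 (by omega)
  obtain ⟨ls, hls, hmax⟩ := Finset.exists_max_image I1 (fun l => e2norm (z l)) hne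
  obtain ⟨l0, hl0, hl0S⟩ : ∃ l ∈ I1, l ∉ S :=
    Finset.exists_mem_notMem_of_card_lt_card (by omega)
  have hM : 0 < e2norm (z ls) := by
    refine lt_of_lt_of_le (e2norm_pos (z l0) ?_) (hmax l0 hl0)
    obtain ⟨j, hj⟩ := (hI1 l0).1 hl0
    intro h
    apply hj
    have := congrFun h j
    simpa [hz, hl0S] using this
  set M := e2norm (z ls) with hMdef
  have hμ := blockCoh_nonneg A
  have hterm : ∀ l k, k ∈ I1 → l ≠ k → e2norm (bgram A l k *ᵥ z k) ≤ d * blockCoh A * M := by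
    intro l k hk hlk
    exact (off_le hd A l k hlk _).trans
      (mul_le_mul_of_nonneg_left (hmax k hk) (by positivity))
  have hout : ∀ l, l ∉ I1 → e2norm (blkT A l (fun i => y i - PSy i)) ≤
      K * (d * blockCoh A * M) := by
    intro l hl
    rw [hex]
    refine (e2norm_sum_le _ _).trans ?_
    refine (Finset.sum_le_card_nsmul _ _ _ fun k hk =>
      hterm l k hk (fun h => hl (h ▸ hk))).trans ?_
    rw [hcard, nsmul_eq_mul]
  have hin : (1 - ((d : ℝ) - 1) * subCoh A) * M - ((K : ℝ) - 1) * (d * blockCoh A * M) ≤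
      e2norm (blkT A ls (fun i => y i - PSy i)) := by
    rw [hex, ← Finset.add_sum_erase _ _ hls]
    refine le_trans ?_ (e2norm_add_ge _ _)
    have h1 := diag_ge A hA ls (z ls)
    have h2 : e2norm (∑ k ∈ I1.erase ls, bgram A ls k *ᵥ z k) ≤
        ((K : ℝ) - 1) * (d * blockCoh A * M) := by
      refine (e2norm_sum_le _ _).trans ?_
      refine (Finset.sum_le_card_nsmul _ _ _ fun k hk =>
        hterm ls k (Finset.mem_of_mem_erase hk) (Finset.ne_of_mem_erase hk).symm).trans ?_
      rw [Finset.card_erase_of_mem hls, hcard, nsmul_eq_mul, Nat.cast_sub hK1, Nat.cast_one]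
    linarith
  obtain ⟨lo, hlo⟩ : ∃ l, l ∉ I1 := by
    by_contra! h
    have : I1 = Finset.univ := Finset.eq_univ_iff_forall.2 h
    rw [this, Finset.card_univ, Fintype.card_fin] at hcard
    omega
  have : Nonempty {l : Fin L // l ∉ I1} := ⟨⟨lo, hlo⟩⟩
  refine lt_of_le_of_lt (ciSup_le fun l => hout l.1 l.2) ?_
  refine lt_of_lt_of_le ?_ (le_ciSup (f := fun l : {l : Fin L // l ∈ I1} =>
    e2norm (blkT A l.1 (fun i => y i - PSy i))) (Set.finite_range _).bddAbove ⟨ls, hls⟩)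
  refine lt_of_lt_of_le ?_ hin
  have := mul_pos hcond hM
  linarith
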